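/- Let p_1 < p_2 < ... denote the sequence of all primes and for n ≥ 1 set 𝒮(n) = ∑_{d | n} d·φ(d). Then the limit as N → ∞ of (1/N) · ∑_{i=1}^N 𝒮(p_i − 1)/(p_i − 1)² exists and equals Stephens' constant S = ∏_p (1 − p/(p³ − 1)). -/

import Mathlib

open Filter

/-- `𝒮(n) = ∑_{d | n} d·φ(d)`. -/
def stephensSum (n : ℕ) : ℕ := ∑ d ∈ n.divisors, d * d.totient

/-- Stephens' constant `S = ∏_p (1 - p/(p³ - 1))`, product over all primes. -/
noncomputable def stephensConstant : ℝ :=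
  ∏' p : Nat.Primes, (1 - ((p : ℕ) : ℝ) / (((p : ℕ) : ℝ) ^ 3 - 1))


open MeasureTheory Topology

open Filter MeasureTheory Topology

/-- triangle function -/
noncomputable def triK (t : ℝ) : ℝ := max 0 (1 - |t|)

/-- Fejer kernel -/
noncomputable def fejK (v : ℝ) : ℝ := Real.sinc (v / 2) ^ 2

lemma triK_cont : Continuous triK := by unfold triK; fun_prop

lemma triK_nonneg (t : ℝ) : 0 ≤ triK t := le_max_left _ _

lemma triK_le (t : ℝ) : triK t ≤ 1 := by
  unfold triK; apply max_le <;> linarith [abs_nonneg t]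

lemma triK_zero {t : ℝ} (h : t ∉ Set.Icc (-1:ℝ) 1) : triK t = 0 := by
  unfold triK
  apply max_eq_left
  by_contra hh
  push Not at hh
  have : |t| < 1 := by linarith
  rw [abs_lt] at this
  exact h ⟨this.1.le, this.2.le⟩

lemma triK_compact : HasCompactSupport triK :=
  HasCompactSupport.intro isCompact_Icc (fun _ h => triK_zero h)

lemma triK_integrable : Integrable triK :=
  triK_cont.integrable_of_hasCompactSupport triK_compact

lemma fejK_cont : Continuous fejK := by
  unfold fejK
  exact (Real.continuous_sinc.comp (by fun_prop)).pow 2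

lemma fejK_nonneg (v : ℝ) : 0 ≤ fejK v := sq_nonneg _

lemma fejK_le (v : ℝ) : fejK v ≤ 5 * (1 + v ^ 2)⁻¹ := by
  have h1 : fejK v ≤ 1 := by
    unfold fejK
    have := Real.abs_sinc_le_one (v/2)
    rw [← sq_abs]; exact pow_le_one₀ (abs_nonneg _) this
  have h2 : v ^ 2 * fejK v ≤ 4 := by
    unfold fejK
    by_cases hv : v = 0
    · simp [hv]
    rw [Real.sinc_of_ne_zero (by simpa using hv)]
    have : v ^ 2 * (Real.sin (v / 2) / (v / 2)) ^ 2 = 4 * Real.sin (v/2) ^ 2 := by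
      field_simp; ring
    rw [this]
    nlinarith [Real.sin_sq_le_one (v/2)]
  rw [← div_eq_mul_inv, le_div_iff₀ (by positivity)]
  nlinarith

lemma fejK_integrable : Integrable fejK := by
  refine Integrable.mono' (integrable_inv_one_add_sq.const_mul 5) fejK_cont.aestronglyMeasurable ?_
  filter_upwards with v
  rw [Real.norm_of_nonneg (fejK_nonneg v)]
  exact fejK_le v

lemma fejK_integral_pos : 0 < ∫ v, fejK v := by
  refine integral_pos_of_integrable_nonneg_nonzero (x := 0) fejK_cont fejK_integrable
    fejK_nonneg ?_
  simp [fejK]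

lemma triK_fourier {v : ℝ} (hv : v ≠ 0) :
    ∫ t : ℝ, (triK t : ℂ) * Complex.exp (Complex.I * t * v) = (fejK v : ℂ) := by
  have hv' : (v:ℂ) ≠ 0 := by exact_mod_cast hv
  have h0 : ∫ t : ℝ, (triK t : ℂ) * Complex.exp (Complex.I * t * v) =
      ∫ t in (-1:ℝ)..1, (triK t : ℂ) * Complex.exp (Complex.I * t * v) := by
    rw [intervalIntegral.integral_of_le (by norm_num), ← integral_Icc_eq_integral_Ioc]
    symm
    apply setIntegral_eq_integral_of_forall_compl_eq_zero
    intro t ht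
    rw [triK_zero ht]; simp
  have hc : Continuous (fun t : ℝ => (triK t : ℂ) * Complex.exp (Complex.I * t * v)) := by
    have := triK_cont
    fun_prop
  have hd : ∀ t : ℝ, HasDerivAt (fun t : ℝ => Complex.exp (Complex.I * t * v))
      (Complex.exp (Complex.I * t * v) * (Complex.I * v)) t := by
    intro t
    have : HasDerivAt (fun t : ℝ => Complex.I * t * v) (Complex.I * v) t := by
      have h1 : HasDerivAt (fun t : ℝ => (t : ℂ)) 1 t := Complex.ofRealCLM.hasDerivAt
      simpa using (h1.const_mul Complex.I).mul_const (v : ℂ)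
    exact this.cexp
  have hp : ∀ t : ℝ, HasDerivAt (fun t : ℝ => (t : ℂ)) 1 t := fun t => Complex.ofRealCLM.hasDerivAt
  rw [h0, ← intervalIntegral.integral_add_adjacent_intervals (b := 0)
    (hc.intervalIntegrable _ _) (hc.intervalIntegrable _ _)]
  have e1 : ∫ t in (-1:ℝ)..0, (triK t : ℂ) * Complex.exp (Complex.I * t * v) =
      ∫ t in (-1:ℝ)..0, (1 + (t:ℂ)) * Complex.exp (Complex.I * t * v) := by
    apply intervalIntegral.integral_congr
    intro t ht
    rw [Set.uIcc_of_le (by norm_num)] at ht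
    have : triK t = 1 + t := by
      unfold triK; rw [abs_of_nonpos ht.2]; rw [max_eq_right] <;> linarith [ht.1]
    simp [this]
  have e2 : ∫ t in (0:ℝ)..1, (triK t : ℂ) * Complex.exp (Complex.I * t * v) =
      ∫ t in (0:ℝ)..1, (1 - (t:ℂ)) * Complex.exp (Complex.I * t * v) := by
    apply intervalIntegral.integral_congr
    intro t ht
    rw [Set.uIcc_of_le (by norm_num)] at ht
    have : triK t = 1 - t := by
      unfold triK; rw [abs_of_nonneg ht.1]; rw [max_eq_right]; linarith [ht.2]
    simp [this]
  rw [e1, e2]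
  rw [intervalIntegral.integral_eq_sub_of_hasDerivAt (f := fun t : ℝ =>
    (1 + (t:ℂ)) * Complex.exp (Complex.I * t * v) / (Complex.I * v)
      - Complex.exp (Complex.I * t * v) / (Complex.I * v) ^ 2)]
  rotate_left
  · intro t _
    convert! ((((hp t).const_add 1).mul (hd t)).div_const (Complex.I * v)).sub
      ((hd t).div_const ((Complex.I * v)^2)) using 1
    field_simp
    ring
  · exact Continuous.intervalIntegrable (by fun_prop) _ _
  rw [intervalIntegral.integral_eq_sub_of_hasDerivAt (f := fun t : ℝ =>
    (1 - (t:ℂ)) * Complex.exp (Complex.I * t * v) / (Complex.I * v)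
      + Complex.exp (Complex.I * t * v) / (Complex.I * v) ^ 2)]
  rotate_left
  · intro t _
    convert! ((((hp t).const_sub 1).mul (hd t)).div_const (Complex.I * v)).add
      ((hd t).div_const ((Complex.I * v)^2)) using 1
    field_simp
    ring
  · exact Continuous.intervalIntegrable (by fun_prop) _ _
  have hf : fejK v = (2 - 2 * Real.cos v) / v ^ 2 := by
    unfold fejK
    rw [Real.sinc_of_ne_zero (by simpa using hv)]
    have := Real.cos_sq (v/2)
    have h2 := Real.sin_sq_add_cos_sq (v/2)
    rw [show 2 * (v/2) = v by ring] at this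
    field_simp
    nlinarith
  rw [hf]
  push_cast
  rw [Complex.cos]
  simp only [mul_pow, Complex.I_sq]
  rw [show Complex.I * -1 * (v:ℂ) = -(v:ℂ) * Complex.I by ring,
    show Complex.I * 1 * (v:ℂ) = (v:ℂ) * Complex.I by ring]
  simp
  field_simp
  ring

open Filter MeasureTheory Topology

lemma wi_fubini (H : ℝ → ℝ) (hHm : Measurable H) (C : ℝ) (hHb : ∀ u, |H u| ≤ C)
    (hH0 : ∀ u < 0, H u = 0) (g : ℂ → ℂ)
    (hg : ∀ z : ℂ, 0 < z.re → ∫ u : ℝ, (H u : ℂ) * Complex.exp (-z * u) = g z)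
    (T : ℝ) (hT : 0 < T) (δ : ℝ) (hδ : 0 < δ) (x : ℝ) :
    ∫ u : ℝ, ((H u * Real.exp (-δ * u) * fejK (T * (x - u)) : ℝ) : ℂ) =
      ∫ t : ℝ, (triK t : ℂ) * Complex.exp (Complex.I * t * T * x) * g (δ + Complex.I * t * T) := by
  have hexp : Integrable (fun u : ℝ => H u * Real.exp (-δ * u)) := by
    have h1 : IntegrableOn (fun u : ℝ => C * Real.exp (-δ * u)) (Set.Ici 0) := by
      rw [integrableOn_Ici_iff_integrableOn_Ioi]
      exact (exp_neg_integrableOn_Ioi 0 hδ).const_mul C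
    have h2 : Integrable ((Set.Ici (0:ℝ)).indicator (fun u : ℝ => C * Real.exp (-δ * u))) :=
      h1.integrable_indicator measurableSet_Ici
    refine h2.mono' (by fun_prop) ?_
    filter_upwards with u
    by_cases hu : u < 0
    · rw [hH0 u hu, Set.indicator_of_notMem (by simpa using hu)]; simp
    · rw [Set.indicator_of_mem (by simpa using hu), norm_mul, Real.norm_eq_abs,
        Real.norm_of_nonneg (Real.exp_pos _).le]
      gcongr
      exact hHb u
  have hprod : Integrable (fun p : ℝ × ℝ => (H p.1 * Real.exp (-δ * p.1)) * triK p.2)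
      (volume.prod volume) := hexp.mul_prod triK_integrable
  have hF : Integrable (fun p : ℝ × ℝ => ((H p.1 * Real.exp (-δ * p.1) * triK p.2 : ℝ) : ℂ)
      * Complex.exp (Complex.I * p.2 * (T * (x - p.1) : ℝ))) (volume.prod volume) := by
    refine Integrable.mono' hprod.norm ?_ ?_
    · apply Measurable.aestronglyMeasurable
      have := triK_cont.measurable
      fun_prop
    · filter_upwards with p
      rw [norm_mul, Complex.norm_real]
      have : Complex.I * p.2 * (T * (x - p.1) : ℝ) = ((p.2 * (T * (x - p.1)) : ℝ) : ℂ) * Complex.I := by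
        push_cast; ring
      rw [this, Complex.norm_exp_ofReal_mul_I, mul_one]
  have hswap := integral_integral_swap (f := fun (u t : ℝ) =>
    ((H u * Real.exp (-δ * u) * triK t : ℝ) : ℂ)
      * Complex.exp (Complex.I * t * (T * (x - u) : ℝ))) hF
  have hL : ∫ u : ℝ, ((H u * Real.exp (-δ * u) * fejK (T * (x - u)) : ℝ) : ℂ) =
     ∫ u : ℝ, ∫ t : ℝ, ((H u * Real.exp (-δ * u) * triK t : ℝ) : ℂ)
      * Complex.exp (Complex.I * t * (T * (x - u) : ℝ)) := by
    apply integral_congr_ae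
    have : ∀ᵐ u : ℝ, u ≠ x := by
      rw [ae_iff]; simp
    filter_upwards [this] with u hu
    rw [Complex.ofReal_mul, ← triK_fourier (v := T * (x - u))
      (mul_ne_zero hT.ne' (sub_ne_zero.mpr hu.symm)), ← integral_const_mul]
    congr 1
    ext t
    push_cast
    ring
  rw [hL, hswap]
  congr 1
  ext t
  rw [← hg _ (by simpa using hδ), ← integral_const_mul]
  congr 1
  ext u
  push_cast
  rw [show (triK t : ℂ) * Complex.exp (Complex.I * t * T * x) *
      (H u * Complex.exp (-(δ + Complex.I * t * T) * u)) =
      H u * triK t * (Complex.exp (Complex.I * t * T * x) *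
        Complex.exp (-(δ + Complex.I * t * T) * u)) by ring,
    show (H u : ℂ) * Complex.exp (-δ * u) * triK t * Complex.exp (Complex.I * t * (T * (x - u))) =
      H u * triK t * (Complex.exp (-δ * u) * Complex.exp (Complex.I * t * (T * (x - u)))) by ring,
    ← Complex.exp_add, ← Complex.exp_add]
  congr 2
  ring

lemma wi_limit (H : ℝ → ℝ) (hHm : Measurable H) (C : ℝ) (hHb : ∀ u, |H u| ≤ C)
    (hH0 : ∀ u < 0, H u = 0) (g : ℂ → ℂ) (hgc : ContinuousOn g {z | 0 ≤ z.re})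
    (hg : ∀ z : ℂ, 0 < z.re → ∫ u : ℝ, (H u : ℂ) * Complex.exp (-z * u) = g z)
    (T : ℝ) (hT : 0 < T) (x : ℝ) :
    ∫ u : ℝ, ((H u * fejK (T * (x - u)) : ℝ) : ℂ) =
      ∫ t : ℝ, (triK t : ℂ) * Complex.exp (Complex.I * t * T * x) * g (Complex.I * t * T) := by
  have hC : 0 ≤ C := (abs_nonneg _).trans (hHb 0)
  have hfejm := fejK_cont.measurable
  have hfi : Integrable (fun u => fejK (T * (x - u))) :=
    ((fejK_integrable.comp_mul_left' hT.ne').comp_sub_left x)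
  have hL : Tendsto (fun δ : ℝ => ∫ u : ℝ, ((H u * Real.exp (-δ * u) * fejK (T * (x - u)) : ℝ) : ℂ))
      (𝓝[>] 0) (𝓝 (∫ u : ℝ, ((H u * fejK (T * (x - u)) : ℝ) : ℂ))) := by
    refine tendsto_integral_filter_of_dominated_convergence (fun u => C * fejK (T * (x - u)))
      ?_ ?_ (hfi.const_mul C) ?_
    · filter_upwards with δ
      apply Measurable.aestronglyMeasurable
      fun_prop
    · filter_upwards [self_mem_nhdsWithin] with δ hδ
      filter_upwards with u
      rw [Complex.norm_real, norm_mul, norm_mul, Real.norm_of_nonneg (fejK_nonneg _)]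
      gcongr
      · exact fejK_nonneg _
      · by_cases hu : u < 0
        · simp [hH0 u hu, hC]
        · have : Real.exp (-δ * u) ≤ 1 := by
            rw [Real.exp_le_one_iff]
            have : (0:ℝ) < δ := hδ
            push Not at hu
            nlinarith
          rw [Real.norm_eq_abs, Real.norm_of_nonneg (Real.exp_pos _).le]
          nlinarith [hHb u, abs_nonneg (H u), Real.exp_pos (-δ * u)]
    · filter_upwards with u
      have : Continuous (fun δ : ℝ => ((H u * Real.exp (-δ * u) * fejK (T * (x - u)) : ℝ) : ℂ)) := by
        fun_prop
      have h := (this.tendsto 0).mono_left (nhdsWithin_le_nhds (s := Set.Ioi 0))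
      simpa using h
  have hR : Tendsto (fun δ : ℝ => ∫ t : ℝ, (triK t : ℂ) * Complex.exp (Complex.I * t * T * x)
        * g (δ + Complex.I * t * T))
      (𝓝[>] 0) (𝓝 (∫ t : ℝ, (triK t : ℂ) * Complex.exp (Complex.I * t * T * x)
        * g (Complex.I * t * T))) := by
    have hK : IsCompact ((Set.Icc (0:ℝ) 1) ×ℂ (Set.Icc (-T) T)) := isCompact_Icc.reProdIm isCompact_Icc
    obtain ⟨M, hM⟩ := hK.exists_bound_of_continuousOn (f := g) (hgc.mono (by
      intro z hz; exact hz.1.1))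
    refine tendsto_integral_filter_of_dominated_convergence (fun t => triK t * M)
      ?_ ?_ (triK_integrable.mul_const M) ?_
    · filter_upwards [self_mem_nhdsWithin] with δ hδ
      have hδ : (0:ℝ) < δ := hδ
      apply Continuous.aestronglyMeasurable
      refine Continuous.mul ?_ ?_
      · have := triK_cont
        fun_prop
      · refine hgc.comp_continuous (by fun_prop) ?_
        intro t
        simp [hδ.le]
    · filter_upwards [Ioo_mem_nhdsGT (zero_lt_one : (0:ℝ) < 1)] with δ hδ
      filter_upwards with t
      by_cases ht : t ∈ Set.Icc (-1:ℝ) 1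
      · rw [norm_mul, norm_mul, Complex.norm_real, Real.norm_of_nonneg (triK_nonneg t)]
        have : Complex.I * t * T * x = ((t * T * x : ℝ) : ℂ) * Complex.I := by
          push_cast; ring
        rw [this, Complex.norm_exp_ofReal_mul_I, mul_one]
        gcongr
        · exact triK_nonneg t
        · apply hM
          refine ⟨?_, ?_⟩
          · simpa using ⟨hδ.1.le, hδ.2.le⟩
          · have h1 := ht.1
            have h2 := ht.2
            simp only [Set.mem_preimage, Set.mem_Icc]
            simp
            constructor <;> nlinarith
      · rw [triK_zero ht]; simp
    · filter_upwards with t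
      refine Tendsto.const_mul _ ?_
      have h1 : ContinuousWithinAt g {z | 0 ≤ z.re} (Complex.I * t * T) := hgc _ (by simp)
      refine h1.tendsto.comp ?_
      refine tendsto_nhdsWithin_iff.mpr ⟨?_, ?_⟩
      · have : Continuous (fun δ : ℝ => (δ : ℂ) + Complex.I * t * T) := by fun_prop
        have h := (this.tendsto 0).mono_left (nhdsWithin_le_nhds (s := Set.Ioi 0))
        simpa using h
      · filter_upwards [self_mem_nhdsWithin] with δ hδ
        have hδ : (0:ℝ) < δ := hδ
        simp [hδ.le]
  refine tendsto_nhds_unique hL (hR.congr' ?_)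
  filter_upwards [self_mem_nhdsWithin] with δ hδ
  exact (wi_fubini H hHm C hHb hH0 g hg T hT δ hδ x).symm

lemma wi_RL (H : ℝ → ℝ) (hHm : Measurable H) (C : ℝ) (hHb : ∀ u, |H u| ≤ C)
    (hH0 : ∀ u < 0, H u = 0) (g : ℂ → ℂ) (hgc : ContinuousOn g {z | 0 ≤ z.re})
    (hg : ∀ z : ℂ, 0 < z.re → ∫ u : ℝ, (H u : ℂ) * Complex.exp (-z * u) = g z)
    (T : ℝ) (hT : 0 < T) :
    Tendsto (fun x : ℝ => ∫ v : ℝ, H (x - v / T) * fejK v) atTop (𝓝 0) := by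
  have h1 : Tendsto (fun x : ℝ => ∫ u : ℝ, ((H u * fejK (T * (x - u)) : ℝ) : ℂ)) atTop (𝓝 0) := by
    have := Real.tendsto_integral_exp_smul_cocompact
      (fun t : ℝ => (triK t : ℂ) * g (Complex.I * t * T))
    have h2 : Tendsto (fun x : ℝ => x * (-T / (2 * Real.pi))) atTop (cocompact ℝ) := by
      refine Tendsto.mono_right ?_ atBot_le_cocompact
      apply Tendsto.atTop_mul_const_of_neg _ tendsto_id
      have := Real.pi_pos
      exact div_neg_of_neg_of_pos (by linarith) (by linarith)
    refine (this.comp h2).congr ?_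
    intro x
    rw [wi_limit H hHm C hHb hH0 g hgc hg T hT x]
    simp only [Function.comp]
    congr 1
    ext t
    rw [Circle.smul_def, Real.fourierChar_apply, smul_eq_mul]
    have hpi : (Real.pi : ℂ) ≠ 0 := by exact_mod_cast Real.pi_ne_zero
    rw [show (((2 * Real.pi * -(t * (x * (-T / (2 * Real.pi)))) : ℝ) : ℂ) * Complex.I) = Complex.I * t * T * x by
      push_cast; field_simp]
    ring
  have h3 : Tendsto (fun x : ℝ => ∫ u : ℝ, H u * fejK (T * (x - u))) atTop (𝓝 0) := by
    have := (Complex.continuous_re.tendsto 0).comp h1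
    simp only [Complex.zero_re] at this
    refine this.congr fun x => ?_
    simp only [Function.comp]
    rw [integral_complex_ofReal, Complex.ofReal_re]
  have h4 := h3.const_mul T
  rw [mul_zero] at h4
  refine h4.congr fun x => ?_
  have e1 : ∫ u : ℝ, H u * fejK (T * (x - u)) = ∫ w : ℝ, H (x - w) * fejK (T * w) := by
    rw [← integral_sub_left_eq_self (fun u => H u * fejK (T * (x - u))) volume x]
    simp
  have e2 := Measure.integral_comp_mul_left (fun v => H (x - v / T) * fejK v) T
  rw [e1]
  have e3 : (fun w => H (x - w) * fejK (T * w)) = fun w => H (x - (T * w) / T) * fejK (T * w) := by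
    ext w; rw [mul_div_cancel_left₀ _ hT.ne']
  rw [e3, e2, abs_of_pos (by positivity), smul_eq_mul, ← mul_assoc, mul_inv_cancel₀ hT.ne', one_mul]

open Filter MeasureTheory Topology

lemma wi_tauber (B : ℝ → ℝ) (hBm : Measurable B) (C A : ℝ) (hB0 : ∀ u, 0 ≤ B u) (hBC : ∀ u, B u ≤ C)
    (hmono : ∀ u v, u ≤ v → B u * Real.exp u ≤ B v * Real.exp v)
    (hlim : ∀ T : ℝ, 0 < T → Tendsto (fun x : ℝ =>
      ∫ v : ℝ, (B (x - v / T) - (Set.Ici 0).indicator (fun _ => A) (x - v / T)) * fejK v)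
      atTop (𝓝 0)) :
    Tendsto B atTop (𝓝 A) := by
  have hfejm := fejK_cont.measurable
  have hind : ∀ T : ℝ, 0 < T → Tendsto (fun x : ℝ =>
      ∫ v : ℝ, (Set.Ici 0).indicator (fun _ => A) (x - v / T) * fejK v) atTop
      (𝓝 (∫ v : ℝ, A * fejK v)) := by
    intro T hT
    refine tendsto_integral_filter_of_dominated_convergence (fun v => |A| * fejK v)
      ?_ ?_ (fejK_integrable.const_mul _) ?_
    · filter_upwards with x
      apply Measurable.aestronglyMeasurable
      refine Measurable.mul ?_ hfejm
      exact (measurable_const.indicator measurableSet_Ici).comp (by fun_prop)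
    · filter_upwards with x
      filter_upwards with v
      rw [norm_mul, Real.norm_of_nonneg (fejK_nonneg v)]
      gcongr
      · exact fejK_nonneg v
      · rw [← Real.norm_eq_abs]; exact norm_indicator_le_norm_self (fun _ => A) _
    · filter_upwards with v
      refine Tendsto.congr' ?_ tendsto_const_nhds
      filter_upwards [eventually_ge_atTop (v / T)] with x hx
      rw [Set.indicator_of_mem]
      simpa using hx
  have hBint : ∀ T x : ℝ, Integrable (fun v => B (x - v / T) * fejK v) := by
    intro T x
    refine Integrable.mono' (fejK_integrable.const_mul C) ?_ ?_
    · apply Measurable.aestronglyMeasurable; fun_prop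
    · filter_upwards with v
      rw [norm_mul, Real.norm_of_nonneg (fejK_nonneg v), Real.norm_of_nonneg (hB0 _)]
      exact mul_le_mul_of_nonneg_right (hBC _) (fejK_nonneg v)
  set c := ∫ v, fejK v with hc
  have hcpos : 0 < c := fejK_integral_pos
  have hBlim : ∀ T : ℝ, 0 < T → Tendsto (fun x : ℝ => ∫ v : ℝ, B (x - v / T) * fejK v) atTop
      (𝓝 (A * c)) := by
    intro T hT
    have := (hlim T hT).add (hind T hT)
    rw [zero_add, integral_const_mul] at this
    refine this.congr fun x => ?_
    rw [← integral_add]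
    · congr 1; ext v; ring
    · have : Integrable (fun v => (Set.Ici 0).indicator (fun _ => A) (x - v / T) * fejK v) := by
        refine Integrable.mono' (fejK_integrable.const_mul |A|) ?_ ?_
        · apply Measurable.aestronglyMeasurable
          refine Measurable.mul ?_ hfejm
          exact (measurable_const.indicator measurableSet_Ici).comp (by fun_prop)
        · filter_upwards with v
          rw [norm_mul, Real.norm_of_nonneg (fejK_nonneg v)]
          gcongr
          · exact fejK_nonneg v
          · rw [← Real.norm_eq_abs]; exact norm_indicator_le_norm_self (fun _ => A) _
      refine ((hBint T x).sub this).congr ?_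
      filter_upwards with v
      simp; ring
    · refine Integrable.mono' (fejK_integrable.const_mul |A|) ?_ ?_
      · apply Measurable.aestronglyMeasurable
        refine Measurable.mul ?_ hfejm
        exact (measurable_const.indicator measurableSet_Ici).comp (by fun_prop)
      · filter_upwards with v
        rw [norm_mul, Real.norm_of_nonneg (fejK_nonneg v)]
        gcongr
        · exact fejK_nonneg v
        · rw [← Real.norm_eq_abs]; exact norm_indicator_le_norm_self (fun _ => A) _
  -- truncated mass
  let m : ℕ → ℝ := fun n => ∫ v in Set.Icc (-(n:ℝ)) n, fejK v
  have hm : Tendsto m atTop (𝓝 c) := by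
    have h := tendsto_setIntegral_of_monotone (μ := volume) (f := fejK)
      (s := fun n : ℕ => Set.Icc (-(n:ℝ)) n) (fun n => measurableSet_Icc)
      (by
        intro i j hij
        have : (i:ℝ) ≤ j := by exact_mod_cast hij
        exact Set.Icc_subset_Icc (by linarith) this)
      fejK_integrable.integrableOn
    have hu : (⋃ n : ℕ, Set.Icc (-(n:ℝ)) n) = Set.univ := by
      rw [Set.eq_univ_iff_forall]
      intro v
      obtain ⟨n, hn⟩ := exists_nat_ge |v|
      rw [Set.mem_iUnion]
      exact ⟨n, abs_le.mp hn⟩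
    rw [hu, setIntegral_univ] at h
    exact h
  -- pointwise inequalities
  have hup : ∀ n : ℕ, 0 < n → ∀ y : ℝ, B y * Real.exp (-(2 / (n:ℝ))) * m n ≤
      ∫ v : ℝ, B ((y + 1 / n) - v / ((n:ℝ)^2)) * fejK v := by
    intro n hn y
    have hn' : (0:ℝ) < n := by exact_mod_cast hn
    calc B y * Real.exp (-(2 / (n:ℝ))) * m n
        = ∫ v in Set.Icc (-(n:ℝ)) n, B y * Real.exp (-(2 / (n:ℝ))) * fejK v := by
          rw [integral_const_mul]
      _ ≤ ∫ v in Set.Icc (-(n:ℝ)) n, B ((y + 1 / n) - v / ((n:ℝ)^2)) * fejK v := by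
          refine setIntegral_mono_on (fejK_integrable.const_mul _).integrableOn
            (hBint _ _).integrableOn measurableSet_Icc ?_
          intro v hv
          refine mul_le_mul_of_nonneg_right ?_ (fejK_nonneg v)
          have h1 : v / (n:ℝ)^2 ≤ 1 / n := by
            rw [div_le_div_iff₀ (by positivity) hn']; nlinarith [hv.2]
          have h2 : -(1 / (n:ℝ)) ≤ v / (n:ℝ)^2 := by
            rw [← neg_div, div_le_div_iff₀ hn' (by positivity)]; nlinarith [hv.1]
          have h3 := hmono y ((y + 1 / n) - v / ((n:ℝ)^2)) (by linarith)
          have h4 : Real.exp ((y + 1 / n) - v / ((n:ℝ)^2)) ≤ Real.exp (2 / n) * Real.exp y := by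
            rw [← Real.exp_add]; apply Real.exp_le_exp.mpr
            have : 2 / (n:ℝ) = 1 / n + 1 / n := by ring
            linarith
          rw [Real.exp_neg, ← div_eq_mul_inv, div_le_iff₀ (Real.exp_pos _)]
          have h5 := h3.trans (mul_le_mul_of_nonneg_left h4 (hB0 _))
          have := Real.exp_pos y
          rw [← mul_assoc] at h5
          exact le_of_mul_le_mul_right h5 this
      _ ≤ _ := setIntegral_le_integral (hBint _ _) (by
          filter_upwards with v
          exact mul_nonneg (hB0 _) (fejK_nonneg v))
  have hlow : ∀ n : ℕ, 0 < n → ∀ y : ℝ, 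
      ∫ v : ℝ, B ((y - 1 / n) - v / ((n:ℝ)^2)) * fejK v ≤
        B y * Real.exp (2 / (n:ℝ)) * c + C * (c - m n) := by
    intro n hn y
    have hn' : (0:ℝ) < n := by exact_mod_cast hn
    have hs := integral_add_compl (measurableSet_Icc (a := -(n:ℝ)) (b := n))
      (hBint ((n:ℝ)^2) (y - 1 / n))
    have hs2 := integral_add_compl (measurableSet_Icc (a := -(n:ℝ)) (b := n)) fejK_integrable
    have hmc : m n ≤ c := setIntegral_le_integral fejK_integrable (by
      filter_upwards with v using fejK_nonneg v)
    rw [← hs]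
    have i1 : ∫ v in Set.Icc (-(n:ℝ)) n, B ((y - 1 / n) - v / ((n:ℝ)^2)) * fejK v ≤
        B y * Real.exp (2 / (n:ℝ)) * m n := by
      rw [← integral_const_mul]
      refine setIntegral_mono_on (hBint _ _).integrableOn (fejK_integrable.const_mul _).integrableOn
             measurableSet_Icc ?_
      intro v hv
      refine mul_le_mul_of_nonneg_right ?_ (fejK_nonneg v)
      have h1 : v / (n:ℝ)^2 ≤ 1 / n := by
        rw [div_le_div_iff₀ (by positivity) hn']; nlinarith [hv.2]
      have h2 : -(1 / (n:ℝ)) ≤ v / (n:ℝ)^2 := by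
        rw [← neg_div, div_le_div_iff₀ hn' (by positivity)]; nlinarith [hv.1]
      have h3 := hmono ((y - 1 / n) - v / ((n:ℝ)^2)) y (by linarith)
      have h4 : Real.exp y ≤ Real.exp (2 / n) * Real.exp ((y - 1 / n) - v / ((n:ℝ)^2)) := by
        rw [← Real.exp_add]; apply Real.exp_le_exp.mpr
        have : 2 / (n:ℝ) = 1 / n + 1 / n := by ring
        linarith
      have h5 := h3.trans (mul_le_mul_of_nonneg_left h4 (hB0 _))
      rw [← mul_assoc] at h5
      exact le_of_mul_le_mul_right h5 (Real.exp_pos _)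
    have i2 : ∫ v in (Set.Icc (-(n:ℝ)) n)ᶜ, B ((y - 1 / n) - v / ((n:ℝ)^2)) * fejK v ≤
        C * (c - m n) := by
      have : c - m n = ∫ v in (Set.Icc (-(n:ℝ)) n)ᶜ, fejK v := by
        simp only [m]; linarith
      rw [this, ← integral_const_mul]
      refine setIntegral_mono_on (hBint _ _).integrableOn (fejK_integrable.const_mul _).integrableOn
             measurableSet_Icc.compl ?_
      intro v hv
      exact mul_le_mul_of_nonneg_right (hBC _) (fejK_nonneg v)
    have i3 : B y * Real.exp (2 / (n:ℝ)) * m n ≤ B y * Real.exp (2 / (n:ℝ)) * c :=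
      mul_le_mul_of_nonneg_left hmc (mul_nonneg (hB0 _) (Real.exp_pos _).le)
    linarith
  have hone : Tendsto (fun n : ℕ => 1 / (n:ℝ)) atTop (𝓝 0) := tendsto_one_div_atTop_nhds_zero_nat
  have htwo : Tendsto (fun n : ℕ => 2 / (n:ℝ)) atTop (𝓝 0) := by
    have := hone.const_mul 2
    simpa [div_eq_mul_inv] using this
  have hexp1 : Tendsto (fun n : ℕ => Real.exp (2 / (n:ℝ))) atTop (𝓝 1) := by
    have := (Real.continuous_exp.tendsto 0).comp htwo
    rw [Real.exp_zero] at this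
    exact this
  have hexp2 : Tendsto (fun n : ℕ => Real.exp (-(2 / (n:ℝ)))) atTop (𝓝 1) := by
    have := (Real.continuous_exp.tendsto _).comp htwo.neg
    rw [neg_zero, Real.exp_zero] at this
    exact this
  rw [tendsto_order]
  constructor
  · intro a ha
    have hU : Tendsto (fun n : ℕ => a * Real.exp (2 / (n:ℝ)) * c + C * (c - m n)) atTop
        (𝓝 (a * c)) := by
      have := ((hexp1.const_mul a).mul_const c).add ((hm.const_sub c).const_mul C)
      simpa using this
    have hlt : a * c < A * c := mul_lt_mul_of_pos_right ha hcpos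
    obtain ⟨n, hn, hn0⟩ := ((hU.eventually (gt_mem_nhds hlt)).and (eventually_gt_atTop 0)).exists
    have hn' : (0:ℝ) < n := by exact_mod_cast hn0
    have ht : Tendsto (fun y : ℝ => y - 1 / (n:ℝ)) atTop atTop :=
      tendsto_atTop_add_const_right _ _ tendsto_id
    have hev := ((hBlim ((n:ℝ)^2) (by positivity)).comp ht).eventually (lt_mem_nhds hn)
    filter_upwards [hev] with y hy
    have h6 := hlow n hn0 y
    simp only [Function.comp] at hy
    have h7 : a * Real.exp (2 / (n:ℝ)) * c < B y * Real.exp (2 / (n:ℝ)) * c := by linarith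
    exact lt_of_mul_lt_mul_right (lt_of_mul_lt_mul_right h7 hcpos.le) (Real.exp_pos _).le
  · intro a ha
    have hU : Tendsto (fun n : ℕ => a * Real.exp (-(2 / (n:ℝ))) * m n) atTop
        (𝓝 (a * c)) := by
      have := ((hexp2.const_mul a)).mul hm
      simpa using this
    have hlt : A * c < a * c := mul_lt_mul_of_pos_right ha hcpos
    obtain ⟨n, ⟨hn, hn0⟩, hmn⟩ := (((hU.eventually (lt_mem_nhds hlt)).and
      (eventually_gt_atTop 0)).and (hm.eventually (lt_mem_nhds hcpos))).exists
    have hn' : (0:ℝ) < n := by exact_mod_cast hn0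
    have ht : Tendsto (fun y : ℝ => y + 1 / (n:ℝ)) atTop atTop :=
      tendsto_atTop_add_const_right _ _ tendsto_id
    have hev := ((hBlim ((n:ℝ)^2) (by positivity)).comp ht).eventually (gt_mem_nhds hn)
    filter_upwards [hev] with y hy
    have h6 := hup n hn0 y
    simp only [Function.comp] at hy
    have h7 : B y * Real.exp (-(2 / (n:ℝ))) * m n < a * Real.exp (-(2 / (n:ℝ))) * m n := by linarith
    exact lt_of_mul_lt_mul_right (lt_of_mul_lt_mul_right h7 hmn.le) (Real.exp_pos _).le

open Filter MeasureTheory Topology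

theorem wiener_ikehara (a : ℕ → ℝ) (ha : ∀ n, 0 ≤ a n) (C : ℝ)
    (hC : ∀ n : ℕ, ∑ k ∈ Finset.Icc 1 n, a k ≤ C * n) (A : ℝ) (G : ℂ → ℂ)
    (hGc : ContinuousOn G {s | 1 ≤ s.re})
    (hG : ∀ s : ℂ, 1 < s.re → LSeries (fun n => (a n : ℂ)) s = G s + A / (s - 1)) :
    Tendsto (fun n : ℕ => (∑ k ∈ Finset.Icc 1 n, a k) / (n : ℝ)) atTop (𝓝 A) := by
  let S : ℕ → ℝ := fun n => ∑ k ∈ Finset.Icc 1 n, a k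
  have hS0 : ∀ n, 0 ≤ S n := fun n => Finset.sum_nonneg fun k _ => ha k
  have hSmono : Monotone S := by
    intro m n hmn
    exact Finset.sum_le_sum_of_subset_of_nonneg (Finset.Icc_subset_Icc le_rfl hmn)
      (fun k _ _ => ha k)
  have hC0 : 0 ≤ C := by
    have := (hS0 1).trans (hC 1)
    simpa using this
  let B : ℝ → ℝ := fun u => Real.exp (-u) * S ⌊Real.exp u⌋₊
  have hBm : Measurable B := by
    have : Measurable S := measurable_of_countable S
    have h2 : Measurable (fun u : ℝ => S ⌊Real.exp u⌋₊) :=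
      this.comp (Nat.measurable_floor.comp Real.measurable_exp)
    have h3 : Measurable (fun u : ℝ => Real.exp (-u)) := by fun_prop
    exact h3.mul h2
  have hB0 : ∀ u, 0 ≤ B u := fun u => mul_nonneg (Real.exp_pos _).le (hS0 _)
  have hBC : ∀ u, B u ≤ C := by
    intro u
    have h1 : S ⌊Real.exp u⌋₊ ≤ C * Real.exp u :=
      (hC _).trans (mul_le_mul_of_nonneg_left (Nat.floor_le (Real.exp_pos u).le) hC0)
    calc B u ≤ Real.exp (-u) * (C * Real.exp u) := mul_le_mul_of_nonneg_left h1 (Real.exp_pos _).le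
      _ = C := by
        rw [Real.exp_neg]; field_simp
  have hBe : ∀ u, B u * Real.exp u = S ⌊Real.exp u⌋₊ := by
    intro u
    simp only [B]; rw [Real.exp_neg]; field_simp
  have hBneg : ∀ u < 0, B u = 0 := by
    intro u hu
    have : ⌊Real.exp u⌋₊ = 0 := by
      rw [Nat.floor_eq_zero]; simpa using hu
    simp [B, this, S]
  let H : ℝ → ℝ := fun u => B u - (Set.Ici 0).indicator (fun _ => A) u
  have hHm : Measurable H := hBm.sub (measurable_const.indicator measurableSet_Ici)
  have hHb : ∀ u, |H u| ≤ C + |A| := by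
    intro u
    refine (abs_sub _ _).trans (add_le_add ?_ ?_)
    · rw [abs_of_nonneg (hB0 u)]; exact hBC u
    · rw [← Real.norm_eq_abs, ← Real.norm_eq_abs]
      exact norm_indicator_le_norm_self (fun _ => A) u
  have hH0 : ∀ u < 0, H u = 0 := by
    intro u hu
    simp only [H]
    rw [hBneg u hu, Set.indicator_of_notMem (by simpa using hu), sub_zero]
  let g : ℂ → ℂ := fun z => (G (1 + z) - A) / (1 + z)
  have hgc : ContinuousOn g {z | 0 ≤ z.re} := by
    refine ContinuousOn.div ?_ (by fun_prop) ?_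
    · refine ContinuousOn.sub ?_ continuousOn_const
      refine hGc.comp (by fun_prop) ?_
      intro z hz
      have : 0 ≤ z.re := hz
      simpa using this
    · intro z hz h
      have hz : 0 ≤ z.re := hz
      have := congrArg Complex.re h
      simp at this
      linarith
  have hg : ∀ z : ℂ, 0 < z.re → ∫ u : ℝ, (H u : ℂ) * Complex.exp (-z * u) = g z := by
    intro z hz
    have hs : 1 < (1 + z).re := by simpa using hz
    have hs0 : (1 + z) ≠ 0 := by
      intro h; rw [h] at hs; simp at hs; linarith
    have hz0 : z ≠ 0 := by
      intro h; rw [h] at hz; simp at hz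
    have e0 : ∫ u : ℝ, (H u : ℂ) * Complex.exp (-z * u) =
        ∫ u in Set.Ioi (0:ℝ), (H u : ℂ) * Complex.exp (-z * u) := by
      rw [← integral_Ici_eq_integral_Ioi]
      symm
      apply setIntegral_eq_integral_of_forall_compl_eq_zero
      intro u hu
      rw [hH0 u (by simpa using hu)]; simp
    have e1 : ∫ u in Set.Ioi (0:ℝ), (H u : ℂ) * Complex.exp (-z * u) =
        ∫ u in Set.Ioi (0:ℝ), ((B u : ℂ) * Complex.exp (-z * u) - A * Complex.exp (-z * u)) := by
      apply setIntegral_congr_fun measurableSet_Ioi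
      intro u hu
      simp only [H]
      rw [Set.indicator_of_mem (by simpa using (le_of_lt hu))]
      push_cast; ring
    have hei : IntegrableOn (fun u : ℝ => Complex.exp (-z * u)) (Set.Ioi 0) :=
      integrableOn_exp_mul_complex_Ioi (by simpa using hz) 0
    have hBi : IntegrableOn (fun u : ℝ => (B u : ℂ) * Complex.exp (-z * u)) (Set.Ioi 0) := by
      refine Integrable.mono' (hei.norm.const_mul C) ?_ ?_
      · apply Measurable.aestronglyMeasurable; fun_prop
      · filter_upwards with u
        rw [norm_mul, Complex.norm_real, Real.norm_of_nonneg (hB0 u)]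
        exact mul_le_mul_of_nonneg_right (hBC u) (norm_nonneg _)
    rw [e0, e1, integral_sub hBi (hei.const_mul _), integral_const_mul,
      integral_exp_mul_complex_Ioi (by simpa using hz)]
    have himg : Set.image Real.exp (Set.Ioi 0) = Set.Ioi 1 := by
      ext t
      constructor
      · rintro ⟨u, hu, rfl⟩
        exact Real.one_lt_exp_iff.mpr hu
      · intro ht
        have ht : 1 < t := ht
        exact ⟨Real.log t, Real.log_pos ht, Real.exp_log (by linarith)⟩
    have e2 : LSeries (fun n => (a n : ℂ)) (1 + z) = (1 + z) *
        ∫ u in Set.Ioi (0:ℝ), (B u : ℂ) * Complex.exp (-z * u) := by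
      rw [LSeries_eq_mul_integral_of_nonneg a zero_le_one hs ?_ ha]
      · congr 1
        rw [← himg, integral_image_eq_integral_abs_deriv_smul measurableSet_Ioi
          (fun u _ => (Real.hasDerivAt_exp u).hasDerivWithinAt) Real.exp_injective.injOn]
        apply setIntegral_congr_fun measurableSet_Ioi
        intro u hu
        simp only [B, S]
        rw [abs_of_pos (Real.exp_pos u), Complex.real_smul, Complex.cpow_def_of_ne_zero
          (by exact_mod_cast (Real.exp_pos u).ne'), ← Complex.ofReal_log (Real.exp_pos u).le,
          Real.log_exp]
        push_cast
        have : Complex.exp (u * -(1 + z + 1)) = Complex.exp (-u) * Complex.exp (-u) *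
            Complex.exp (-z * u) := by
          rw [← Complex.exp_add, ← Complex.exp_add]; congr 1; ring
        rw [this]
        have h2 : Complex.exp u * Complex.exp (-u) = 1 := by
          rw [← Complex.exp_add]; simp
        linear_combination (Complex.exp (-u) * Complex.exp (-z * u) *
          ∑ k ∈ Finset.Icc 1 ⌊Real.exp u⌋₊, (a k : ℂ)) * h2
      · refine Asymptotics.IsBigO.of_bound C ?_
        filter_upwards with n
        rw [Real.rpow_one, Real.norm_of_nonneg (hS0 n), Real.norm_of_nonneg (Nat.cast_nonneg n)]
        exact hC n
    have e3 := hG (1 + z) hs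
    rw [e2] at e3
    have e4 : ∫ u in Set.Ioi (0:ℝ), (B u : ℂ) * Complex.exp (-z * u) =
        (G (1 + z) + A / (1 + z - 1)) / (1 + z) := by
      rw [eq_div_iff hs0, ← e3]; ring
    rw [e4]
    simp only [g, add_sub_cancel_left]
    simp
    field_simp
    ring
  have hfin : Tendsto B atTop (𝓝 A) := by
    refine wi_tauber B hBm C A hB0 hBC ?_ ?_
    · intro u v huv
      rw [hBe, hBe]
      exact hSmono (Nat.floor_mono (Real.exp_le_exp.mpr huv))
    · intro T hT
      exact wi_RL H hHm _ hHb hH0 g hgc hg T hT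
  have hlog : Tendsto (fun n : ℕ => Real.log n) atTop atTop :=
    Real.tendsto_log_atTop.comp tendsto_natCast_atTop_atTop
  refine (hfin.comp hlog).congr' ?_
  filter_upwards [eventually_gt_atTop 0] with n hn
  have hn' : (0:ℝ) < n := by exact_mod_cast hn
  simp only [Function.comp, B, S]
  rw [Real.exp_neg, Real.exp_log hn', Nat.floor_natCast]
  field_simp

open ArithmeticFunction in
theorem psi_ap (q : ℕ) (hq : 0 < q) :
    Tendsto (fun n : ℕ => (∑ k ∈ Finset.Icc 1 n, vonMangoldt.residueClass (1 : ZMod q) k) / (n : ℝ))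
      atTop (𝓝 ((q.totient : ℝ)⁻¹)) := by
  have : NeZero q := ⟨hq.ne'⟩
  refine wiener_ikehara _ (vonMangoldt.residueClass_nonneg 1) (Real.log 4 + 4) ?_ _
    (vonMangoldt.LFunctionResidueClassAux (1 : ZMod q))
    (vonMangoldt.continuousOn_LFunctionResidueClassAux 1) ?_
  · intro n
    refine le_trans ?_ (Chebyshev.psi_le_const_mul_self (Nat.cast_nonneg n))
    rw [Chebyshev.psi, Nat.floor_natCast, ← Finset.Icc_add_one_left_eq_Ioc]
    exact Finset.sum_le_sum fun k _ => vonMangoldt.residueClass_le 1 k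
  · intro s hs
    rw [vonMangoldt.eqOn_LFunctionResidueClassAux isUnit_one hs]
    push_cast
    ring

open Filter MeasureTheory Topology

/-- primes `p ≤ n` with `p ≡ 1 mod d` -/
def apPrimes (d n : ℕ) : Finset ℕ := (Finset.Icc 1 n).filter (fun p => p.Prime ∧ d ∣ p - 1)

lemma prime_dvd_sub_one_iff {d p : ℕ} (hp : p.Prime) : d ∣ p - 1 ↔ (p : ZMod d) = 1 := by
  rw [← (Nat.modEq_iff_dvd' hp.one_le), ← ZMod.natCast_eq_natCast_iff]
  simp [eq_comm]

open ArithmeticFunction in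
theorem theta_ap (d : ℕ) (hd : 0 < d) :
    Tendsto (fun n : ℕ => (∑ p ∈ apPrimes d n, Real.log p) / (n : ℝ))
      atTop (𝓝 ((d.totient : ℝ)⁻¹)) := by
  obtain ⟨C, hC⟩ := Chebyshev.psi_sub_theta_le_mul_sqrt
  have key : ∀ n : ℕ, ∑ k ∈ Finset.Icc 1 n, vonMangoldt.residueClass (1 : ZMod d) k -
      ∑ p ∈ apPrimes d n, Real.log p =
      ∑ k ∈ (Finset.Icc 1 n).filter (fun k => ¬ k.Prime), vonMangoldt.residueClass (1 : ZMod d) k := by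
    intro n
    rw [sub_eq_iff_eq_add, ← Finset.sum_filter_not_add_sum_filter _ (fun k : ℕ => k.Prime)]
    congr 1
    rw [apPrimes, ← Finset.filter_filter, Finset.sum_filter (p := fun p => d ∣ p - 1)]
    refine Finset.sum_congr rfl fun p hp => ?_
    have hpp := (Finset.mem_filter.mp hp).2
    rw [vonMangoldt.residueClass, Set.indicator_apply]
    simp only [Set.mem_ofPred_eq, prime_dvd_sub_one_iff hpp, vonMangoldt_apply_prime hpp]
  have hle : ∀ n : ℕ, ∑ k ∈ (Finset.Icc 1 n).filter (fun k => ¬ k.Prime),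
      vonMangoldt.residueClass (1 : ZMod d) k ≤ C * √n := by
    intro n
    refine le_trans ?_ (hC n)
    rw [Chebyshev.psi_sub_theta_eq_sum_not_prime, Nat.floor_natCast, ← Finset.Icc_add_one_left_eq_Ioc]
    exact Finset.sum_le_sum fun k _ => vonMangoldt.residueClass_le 1 k
  have hge : ∀ n : ℕ, 0 ≤ ∑ k ∈ (Finset.Icc 1 n).filter (fun k => ¬ k.Prime),
      vonMangoldt.residueClass (1 : ZMod d) k := fun n =>
    Finset.sum_nonneg fun k _ => vonMangoldt.residueClass_nonneg 1 k
  have hz : Tendsto (fun n : ℕ => (∑ k ∈ (Finset.Icc 1 n).filter (fun k => ¬ k.Prime),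
      vonMangoldt.residueClass (1 : ZMod d) k) / (n:ℝ)) atTop (𝓝 0) := by
    have hsq : Tendsto (fun n : ℕ => C * (√(n:ℝ))⁻¹) atTop (𝓝 0) := by
      have h1 : Tendsto (fun n : ℕ => √(n:ℝ)) atTop atTop :=
        Real.tendsto_sqrt_atTop.comp tendsto_natCast_atTop_atTop
      simpa using h1.inv_tendsto_atTop.const_mul C
    refine squeeze_zero' (Eventually.of_forall fun n => div_nonneg (hge n) (Nat.cast_nonneg n)) ?_ hsq
    filter_upwards [eventually_gt_atTop 0] with n hn
    have hn' : (0:ℝ) < n := by exact_mod_cast hn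
    rw [div_le_iff₀ hn']
    refine (hle n).trans (le_of_eq ?_)
    have h2 := Real.mul_self_sqrt hn'.le
    have h3 : √(n:ℝ) ≠ 0 := (Real.sqrt_pos.mpr hn').ne'
    rw [mul_assoc]
    congr 1
    rw [eq_inv_mul_iff_mul_eq₀ h3]
    exact h2
  have := (psi_ap d hd).sub hz
  rw [sub_zero] at this
  refine this.congr fun n => ?_
  rw [← key n]; ring

theorem card_ap (d : ℕ) (hd : 0 < d) :
    Tendsto (fun n : ℕ => ((apPrimes d n).card : ℝ) * Real.log n / (n : ℝ))
      atTop (𝓝 ((d.totient : ℝ)⁻¹)) := by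
  have hθ := theta_ap d hd
  have hcast : Tendsto (fun n : ℕ => (n:ℝ)) atTop atTop := tendsto_natCast_atTop_atTop
  have hlog : Tendsto (fun n : ℕ => Real.log n) atTop atTop := Real.tendsto_log_atTop.comp hcast
  have hll : Tendsto (fun n : ℕ => Real.log (Real.log n) / Real.log n) atTop (𝓝 0) := by
    have := (Real.isLittleO_log_id_atTop.tendsto_div_nhds_zero).comp hlog
    exact this
  have hratio : Tendsto (fun n : ℕ => (1 - 2 * (Real.log (Real.log n) / Real.log n))⁻¹) atTop (𝓝 1) := by
    have : Tendsto (fun n : ℕ => (1 - 2 * (Real.log (Real.log n) / Real.log n))) atTop (𝓝 1) := by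
      simpa using (hll.const_mul 2).const_sub 1
    simpa using this.inv₀ one_ne_zero
  have hupper : Tendsto (fun n : ℕ => (Real.log n)⁻¹ + (∑ p ∈ apPrimes d n, Real.log p) / (n : ℝ) *
      (1 - 2 * (Real.log (Real.log n) / Real.log n))⁻¹) atTop (𝓝 ((d.totient : ℝ)⁻¹)) := by
    simpa using hlog.inv_tendsto_atTop.add (hθ.mul hratio)
  refine tendsto_of_tendsto_of_tendsto_of_le_of_le' hθ hupper ?_ ?_
  · filter_upwards [eventually_gt_atTop 0] with n hn
    gcongr
    rw [← nsmul_eq_mul, ← Finset.sum_const]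
    refine Finset.sum_le_sum fun p hp => ?_
    simp only [apPrimes, Finset.mem_filter, Finset.mem_Icc] at hp
    exact Real.log_le_log (by exact_mod_cast hp.1.1) (by exact_mod_cast hp.1.2)
  · have hev : ∀ᶠ n : ℕ in atTop, Real.log (Real.log n) / Real.log n < 1 / 4 :=
      hll.eventually (gt_mem_nhds (by norm_num))
    filter_upwards [eventually_gt_atTop 0, hlog.eventually_gt_atTop 1, hev] with n hn hl1 hl2
    have hn' : (0:ℝ) < n := by exact_mod_cast hn
    set L := Real.log n with hL
    have hL0 : 0 < L := by linarith
    set y := (n:ℝ) / L ^ 2 with hy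
    have hypos : 0 < y := by positivity
    have hlogy : Real.log y = L * (1 - 2 * (Real.log L / L)) := by
      rw [hy, Real.log_div hn'.ne' (by positivity), Real.log_pow, ← hL]
      field_simp
      push_cast
      ring
    have hf : (0:ℝ) < 1 - 2 * (Real.log L / L) := by linarith
    have hlogypos : 0 < Real.log y := by rw [hlogy]; positivity
    -- split
    have hsplit : ((apPrimes d n).card : ℝ) ≤ y + (∑ p ∈ apPrimes d n, Real.log p) / Real.log y := by
      rw [← Finset.card_filter_add_card_filter_not (s := apPrimes d n) (fun p : ℕ => (p:ℝ) ≤ y)]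
      push_cast
      refine add_le_add ?_ ?_
      · have : (apPrimes d n).filter (fun p : ℕ => (p:ℝ) ≤ y) ⊆ Finset.Icc 1 ⌊y⌋₊ := by
          intro p hp
          simp only [apPrimes, Finset.mem_filter, Finset.mem_Icc] at hp ⊢
          exact ⟨hp.1.1.1, Nat.le_floor hp.2⟩
        have h2 := Finset.card_le_card this
        rw [Nat.card_Icc, Nat.add_sub_cancel] at h2
        exact le_trans (by exact_mod_cast h2) (Nat.floor_le hypos.le)
      · rw [le_div_iff₀ hlogypos, ← nsmul_eq_mul, ← Finset.sum_const]
        refine le_trans (Finset.sum_le_sum (g := fun p : ℕ => Real.log p) fun p hp => ?_)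
          (Finset.sum_le_sum_of_subset_of_nonneg (Finset.filter_subset _ _)
            fun p _ _ => Real.log_natCast_nonneg p)
        have h3 := (Finset.mem_filter.mp hp).2
        push Not at h3
        exact Real.log_le_log hypos h3.le
    rw [div_le_iff₀ hn']
    calc ((apPrimes d n).card : ℝ) * L ≤ (y + (∑ p ∈ apPrimes d n, Real.log p) / Real.log y) * L :=
          mul_le_mul_of_nonneg_right hsplit hL0.le
      _ = _ := by
        rw [hlogy, hy]
        field_simp

open Filter MeasureTheory Topology

lemma dvd_prod_ap (d N m : ℕ) (hm : m ∣ N.factorial) (hc : Nat.Coprime d m) :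
    m ∣ ∏ n ∈ Finset.Icc 1 N, (d * n + 1) := by
  have hm0 : 0 < m := Nat.pos_of_dvd_of_pos hm N.factorial_pos
  obtain ⟨r, hr⟩ : ∃ r : ℕ, d * r ≡ 1 [MOD m] := by
    have : NeZero m := ⟨hm0.ne'⟩
    refine ⟨((d : ZMod m)⁻¹).val, ?_⟩
    rw [← ZMod.natCast_eq_natCast_iff]
    push_cast
    rw [ZMod.natCast_zmod_val, ZMod.coe_mul_inv_eq_one _ hc]
  have h1 : ∏ n ∈ Finset.Icc 1 N, (d * n + 1) ≡ ∏ n ∈ Finset.Icc 1 N, (d * (n + r)) [MOD m] := by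
    rw [← ZMod.natCast_eq_natCast_iff] at hr ⊢
    push_cast at hr ⊢
    refine Finset.prod_congr rfl fun n _ => ?_
    rw [mul_add, hr]
  rw [← (Nat.modEq_zero_iff_dvd)]
  refine h1.trans ?_
  rw [Nat.modEq_zero_iff_dvd, Finset.prod_mul_distrib]
  refine Dvd.dvd.mul_left ?_ _
  refine hm.trans ?_
  have : ∏ n ∈ Finset.Icc 1 N, (n + r) = (r + 1).ascFactorial N := by
    clear * -
    induction N with
    | zero => simp
    | succ k ih =>
      rw [Finset.prod_Icc_succ_top (by omega), ih, Nat.ascFactorial_succ]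
      ring
  rw [this]
  exact Nat.factorial_dvd_ascFactorial _ _

lemma exists_coprime_part (d N : ℕ) (hd : 0 < d) :
    ∃ m : ℕ, m ∣ N.factorial ∧ Nat.Coprime d m ∧ N.factorial ≤ d ^ N * m := by
  have hN := N.factorial_pos
  set g := Nat.gcd N.factorial (d ^ N) with hg
  obtain ⟨m, hm⟩ : g ∣ N.factorial := Nat.gcd_dvd_left _ _
  refine ⟨m, ⟨g, by rw [hm]; ring⟩, ?_, ?_⟩
  · rw [Nat.coprime_iff_gcd_eq_one]
    by_contra hne
    obtain ⟨q, hq, hqd⟩ := Nat.exists_prime_and_dvd hne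
    have hqd1 : q ∣ d := hqd.trans (Nat.gcd_dvd_left _ _)
    have hqm : q ∣ m := hqd.trans (Nat.gcd_dvd_right _ _)
    set v := N.factorial.factorization q with hv
    have hvN : v ≤ N := by
      have : Fact q.Prime := ⟨hq⟩
      have h1 := sub_one_mul_padicValNat_factorial (p := q) N
      rw [← Nat.factorization_def _ hq, ← hv] at h1
      have h2 : 1 ≤ q - 1 := Nat.le_sub_one_of_lt hq.one_lt
      calc v ≤ (q - 1) * v := Nat.le_mul_of_pos_left _ h2
        _ ≤ N := by rw [h1]; exact Nat.sub_le _ _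
    have hqv : q ^ v ∣ g := Nat.dvd_gcd (Nat.ordProj_dvd _ _)
      ((pow_dvd_pow q hvN).trans (pow_dvd_pow_of_dvd hqd1 N))
    have : q ^ (v + 1) ∣ N.factorial := by
      rw [hm, pow_succ]; exact mul_dvd_mul hqv hqm
    exact Nat.pow_succ_factorization_not_dvd hN.ne' hq this
  · conv_lhs => rw [hm]
    exact Nat.mul_le_mul_right _ (Nat.le_of_dvd (by positivity) (Nat.gcd_dvd_right _ _))

/-- Chebyshev-type bound for the product of the primes `N < p ≤ dN + 1`, `p ≡ 1 mod d`. -/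
lemma cheb_prod (d N : ℕ) (hd : 0 < d) (P : Finset ℕ)
    (hP : ∀ p ∈ P, p.Prime ∧ d ∣ p - 1 ∧ N < p ∧ p - 1 ≤ d * N) :
    ∏ p ∈ P, p ≤ d ^ (2 * N) * (N + 1) := by
  obtain ⟨m, hm1, hm2, hm3⟩ := exists_coprime_part d N hd
  set D := ∏ n ∈ Finset.Icc 1 N, (d * n + 1) with hD
  have hDpos : 0 < D := Finset.prod_pos fun n _ => by positivity
  have h1 : ∏ p ∈ P, p ∣ D := by
    apply Finset.prod_primes_dvd
    · intro p hp; exact (hP p hp).1.prime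
    · intro p hp
      obtain ⟨hpp, ⟨k, hk⟩, hNp, hle⟩ := hP p hp
      have hp1 := hpp.two_le
      have hpk : p = d * k + 1 := by omega
      have hk1 : 1 ≤ k := by
        rcases Nat.eq_zero_or_pos k with h | h
        · subst h; omega
        · exact h
      have hkN : k ≤ N := by
        rw [hk] at hle; exact Nat.le_of_mul_le_mul_left hle hd
      rw [hD]
      conv_lhs => rw [hpk]
      exact Finset.dvd_prod_of_mem (fun n => d * n + 1) (Finset.mem_Icc.mpr ⟨hk1, hkN⟩)
  have h2 : m ∣ D := dvd_prod_ap d N m hm1 hm2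
  have hcop : Nat.Coprime (∏ p ∈ P, p) m := by
    apply Nat.Coprime.prod_left
    intro p hp
    obtain ⟨hpp, -, hNp, -⟩ := hP p hp
    have : Nat.Coprime p N.factorial := (Nat.Prime.coprime_iff_not_dvd hpp).mpr (by
      rw [hpp.dvd_factorial]; omega)
    exact this.coprime_dvd_right hm1
  have h3 : (∏ p ∈ P, p) * m ≤ D := Nat.le_of_dvd hDpos (hcop.mul_dvd_of_dvd_of_dvd h1 h2)
  have h4 : D ≤ d ^ N * (N + 1).factorial := by
    calc D ≤ ∏ n ∈ Finset.Icc 1 N, (d * (n + 1)) := by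
          refine Finset.prod_le_prod' fun n _ => ?_
          nlinarith
      _ = d ^ N * (N + 1).factorial := by
          rw [Finset.prod_mul_distrib, Finset.prod_const, Nat.card_Icc, Nat.add_sub_cancel]
          congr 1
          clear * -
          induction N with
          | zero => simp
          | succ k ih =>
            rw [Finset.prod_Icc_succ_top (by omega), ih, Nat.factorial_succ (k + 1)]
            ring
  have h5 : (∏ p ∈ P, p) * N.factorial ≤ (d ^ (2 * N) * (N + 1)) * N.factorial := by
    calc (∏ p ∈ P, p) * N.factorial ≤ (∏ p ∈ P, p) * (d ^ N * m) := Nat.mul_le_mul_left _ hm3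
      _ = d ^ N * ((∏ p ∈ P, p) * m) := by ring
      _ ≤ d ^ N * (d ^ N * (N + 1).factorial) := Nat.mul_le_mul_left _ (h3.trans h4)
      _ = _ := by rw [Nat.factorial_succ]; ring
  exact Nat.le_of_mul_le_mul_right h5 N.factorial_pos

lemma card_ap_trivial (d n : ℕ) (hd : 0 < d) : (apPrimes d n).card ≤ n / d := by
  have : (apPrimes d n).card ≤ (Finset.Icc 1 (n / d)).card := by
    refine Finset.card_le_card_of_injOn (fun p => (p - 1) / d) ?_ ?_
    · intro p hp
      simp only [apPrimes, Finset.coe_filter, Finset.mem_Icc, Set.mem_ofPred_eq] at hp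
      obtain ⟨⟨h1, h2⟩, hpp, hdvd⟩ := hp
      have := hpp.two_le
      simp only [Finset.coe_Icc, Set.mem_Icc]
      refine ⟨Nat.div_pos (Nat.le_of_dvd (by omega) hdvd) hd, Nat.div_le_div_right (by omega)⟩
    · intro p hp p' hp' h
      simp only [apPrimes, Finset.coe_filter, Finset.mem_Icc, Set.mem_ofPred_eq] at hp hp'
      obtain ⟨⟨h1, h2⟩, hpp, hdvd⟩ := hp
      obtain ⟨⟨h1', h2'⟩, hpp', hdvd'⟩ := hp'
      have h3 : p - 1 = p' - 1 := by
        rw [← Nat.div_mul_cancel hdvd, ← Nat.div_mul_cancel hdvd']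
        simp only at h
        rw [h]
      omega
  simpa using this

lemma card_ap_bound (d n : ℕ) (hd : 0 < d) (hn : 16 ≤ n) :
    ((apPrimes d n).card : ℝ) ≤ 32 * ((1 + Real.log d) / d) * (n / Real.log n) := by
  have hd' : (0:ℝ) < d := by exact_mod_cast hd
  have hd1 : (1:ℝ) ≤ d := by exact_mod_cast hd
  have hn' : (16:ℝ) ≤ n := by exact_mod_cast hn
  have hlogd : 0 ≤ Real.log d := Real.log_nonneg hd1
  have hlogn : 0 < Real.log n := Real.log_pos (by linarith)
  set N := n / d with hN
  have hNle : (N:ℝ) ≤ n / d := Nat.cast_div_le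
  have htarget : 32 * ((1 + Real.log d) / d) * (n / Real.log n) =
      (32 * (n / d) * (1 + Real.log d)) / Real.log n := by
    field_simp
  rw [htarget, le_div_iff₀ hlogn]
  have hnd : (0:ℝ) ≤ n / d := by positivity
  by_cases hcase : n < d * d
  · have h1 : ((apPrimes d n).card : ℝ) ≤ n / d := le_trans (by exact_mod_cast card_ap_trivial d n hd) hNle
    have h2 : Real.log n ≤ 2 * Real.log d := by
      have : Real.log n ≤ Real.log (d * d) := Real.log_le_log (by linarith) (by exact_mod_cast hcase.le)
      rw [Real.log_mul hd'.ne' hd'.ne'] at this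
      linarith
    calc ((apPrimes d n).card : ℝ) * Real.log n ≤ (n / d) * (2 * Real.log d) := by gcongr
      _ ≤ _ := by nlinarith
  · push Not at hcase
    have hdN : d ≤ N := (Nat.le_div_iff_mul_le hd).mpr hcase
    have hnN : n < d * (N + 1) := by
      have := Nat.lt_mul_div_succ n hd
      simpa [hN] using this
    have hnN2 : n < (N + 1) * (N + 1) := lt_of_lt_of_le hnN (Nat.mul_le_mul_right _ (by omega))
    have hN4 : 4 ≤ N := by
      by_contra h
      push Not at h
      have : N + 1 ≤ 4 := by omega
      have := Nat.mul_le_mul this this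
      omega
    have hN4' : (4:ℝ) ≤ N := by exact_mod_cast hN4
    have hlogN : Real.log n ≤ 4 * Real.log N := by
      have h1 : (n:ℝ) ≤ (N:ℝ) ^ 4 := by
        have h2 : (n:ℝ) ≤ ((N:ℝ) + 1) * (N + 1) := by exact_mod_cast hnN2.le
        have h3 : (N:ℝ) + 1 ≤ N ^ 2 := by nlinarith
        calc (n:ℝ) ≤ ((N:ℝ) + 1) * (N + 1) := h2
          _ ≤ N^2 * N^2 := by gcongr
          _ = _ := by ring
      have := Real.log_le_log (by linarith) h1
      rw [Real.log_pow] at this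
      exact_mod_cast this
    have hlogNpos : 0 < Real.log N := Real.log_pos (by linarith)
    set P := (apPrimes d n).filter (fun p => N < p) with hPdef
    have hsplit : (apPrimes d n).card ≤ Nat.primeCounting N + P.card := by
      rw [← Finset.card_filter_add_card_filter_not (s := apPrimes d n) (fun p : ℕ => N < p), add_comm]
      refine Nat.add_le_add_right ?_ _
      rw [← Nat.primesLE_card_eq_primeCounting]
      apply Finset.card_le_card
      intro p hp
      simp only [apPrimes, Finset.mem_filter, Finset.mem_Icc] at hp
      rw [Nat.mem_primesLE]
      exact ⟨by omega, hp.1.2.1⟩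
    have hP : ∏ p ∈ P, p ≤ d ^ (2 * N) * (N + 1) := by
      refine cheb_prod d N hd P ?_
      intro p hp
      simp only [hPdef, apPrimes, Finset.mem_filter, Finset.mem_Icc] at hp
      refine ⟨hp.1.2.1, hp.1.2.2, hp.2, ?_⟩
      obtain ⟨k, hk⟩ := hp.1.2.2
      rw [hk]
      refine Nat.mul_le_mul_left _ ?_
      rw [hN, Nat.le_div_iff_mul_le hd]
      have := hp.1.1.2
      rw [mul_comm]; omega
    have hPc : N ^ P.card ≤ ∏ p ∈ P, p := by
      rw [← Finset.prod_const]
      refine Finset.prod_le_prod' fun p hp => ?_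
      exact (Finset.mem_filter.mp hp).2.le
    have hPlog : (P.card : ℝ) * Real.log N ≤ 2 * N * Real.log d + Real.log (N + 1) := by
      have h1 : ((N:ℝ) ^ P.card) ≤ (d:ℝ) ^ (2 * N) * (N + 1) := by exact_mod_cast hPc.trans hP
      have h2 := Real.log_le_log (by positivity) h1
      rw [Real.log_pow, Real.log_mul (by positivity) (by positivity), Real.log_pow] at h2
      push_cast at h2
      exact h2
    have hlogN1 : Real.log (N + 1) ≤ N := by
      have := Real.log_le_sub_one_of_pos (x := (N:ℝ) + 1) (by positivity)
      linarith
    have hpi : (Nat.primeCounting N : ℝ) * Real.log N ≤ 6 * N := by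
      have h1 := Chebyshev.pi_le_log4_mul_div (x := (N:ℝ)) (by linarith)
      rw [Nat.floor_natCast] at h1
      have hs : Real.log (√(N:ℝ)) = Real.log N / 2 := Real.log_sqrt (by positivity)
      have hs2 : Real.log (√(N:ℝ)) ≤ √(N:ℝ) := by
        have := Real.log_le_sub_one_of_pos (x := √(N:ℝ)) (by positivity)
        linarith
      rw [hs] at h1 hs2
      have h4 : Real.log 4 < 2 := by
        have : Real.log 4 = 2 * Real.log 2 := by
          rw [show (4:ℝ) = 2 ^ 2 by norm_num, Real.log_pow]; norm_num
        have := Real.log_two_lt_d9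
        linarith
      have hsq := Real.mul_self_sqrt (show (0:ℝ) ≤ N by positivity)
      calc (Nat.primeCounting N : ℝ) * Real.log N
          ≤ (Real.log 4 * N / (Real.log N / 2) + √N) * Real.log N := by gcongr
        _ = 2 * Real.log 4 * N + √N * Real.log N := by field_simp
        _ ≤ 2 * 2 * N + √N * (2 * √N) := by
            gcongr
            linarith
        _ = 6 * N := by linarith
    have hc : ((apPrimes d n).card : ℝ) ≤ Nat.primeCounting N + P.card := by exact_mod_cast hsplit
    have hcN : ((apPrimes d n).card : ℝ) * Real.log N ≤ 8 * N * (1 + Real.log d) := by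
      have h7 : (0:ℝ) ≤ N * Real.log d := by positivity
      nlinarith [mul_le_mul_of_nonneg_right hc hlogNpos.le]
    calc ((apPrimes d n).card : ℝ) * Real.log n ≤ ((apPrimes d n).card : ℝ) * (4 * Real.log N) := by
          gcongr
      _ = 4 * (((apPrimes d n).card : ℝ) * Real.log N) := by ring
      _ ≤ 4 * (8 * N * (1 + Real.log d)) := by linarith
      _ = 32 * N * (1 + Real.log d) := by ring
      _ ≤ _ := by gcongr

/-- The weight `g(d) = ∏_{p ∣ d} (1 - p) / d²`. -/
noncomputable def gA : ArithmeticFunction ℝ where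
  toFun d := (∏ p ∈ d.primeFactors, (1 - (p : ℝ))) / (d : ℝ) ^ 2
  map_zero' := by simp

lemma gA_apply (d : ℕ) : gA d = (∏ p ∈ d.primeFactors, (1 - (p : ℝ))) / (d : ℝ) ^ 2 := rfl

lemma gA_mult : gA.IsMultiplicative := by
  rw [ArithmeticFunction.IsMultiplicative.iff_ne_zero]
  refine ⟨by simp [gA_apply], ?_⟩
  intro m n hm hn h
  rw [gA_apply, gA_apply, gA_apply, h.primeFactors_mul,
    Finset.prod_union h.disjoint_primeFactors]
  push_cast
  rw [mul_pow, mul_div_mul_comm]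

/-- `d φ(d)` as an arithmetic function. -/
noncomputable def tA : ArithmeticFunction ℝ where
  toFun d := (d : ℝ) * d.totient
  map_zero' := by simp

lemma tA_mult : tA.IsMultiplicative := by
  rw [ArithmeticFunction.IsMultiplicative.iff_ne_zero]
  refine ⟨by simp [tA], ?_⟩
  intro m n hm hn h
  simp only [tA, ArithmeticFunction.coe_mk, Nat.totient_mul h]
  push_cast
  ring

lemma tA_zeta (n : ℕ) : (tA * (ArithmeticFunction.zeta : ArithmeticFunction ℝ)) n = stephensSum n := by
  rw [ArithmeticFunction.coe_mul_zeta_apply]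
  simp [stephensSum, tA]

/-- The normalized sum as an arithmetic function. -/
noncomputable def sA : ArithmeticFunction ℝ where
  toFun n := (stephensSum n : ℝ) / (n : ℝ) ^ 2
  map_zero' := by simp

lemma sA_apply (n : ℕ) : sA n = (stephensSum n : ℝ) / (n : ℝ) ^ 2 := rfl

lemma sA_mult : sA.IsMultiplicative := by
  have h0 := tA_mult.mul (ArithmeticFunction.isMultiplicative_zeta.natCast (R := ℝ))
  rw [ArithmeticFunction.IsMultiplicative.iff_ne_zero]
  refine ⟨by simp [sA_apply, stephensSum], ?_⟩
  intro m n hm hn h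
  have := h0.map_mul_of_coprime h
  rw [tA_zeta, tA_zeta, tA_zeta] at this
  rw [sA_apply, sA_apply, sA_apply, this]
  push_cast
  rw [mul_pow, mul_div_mul_comm]

lemma sA_eq : sA = gA * (ArithmeticFunction.zeta : ArithmeticFunction ℝ) := by
  rw [ArithmeticFunction.IsMultiplicative.eq_iff_eq_on_prime_powers _ sA_mult _
    (gA_mult.mul (ArithmeticFunction.isMultiplicative_zeta.natCast (R := ℝ)))]
  intro p k hp
  rw [ArithmeticFunction.coe_mul_zeta_apply, sA_apply, stephensSum, Nat.sum_divisors_prime_pow hp,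
    Nat.sum_divisors_prime_pow hp]
  have hp0 : (p : ℝ) ≠ 0 := by exact_mod_cast hp.ne_zero
  have hp1 : (p : ℝ) + 1 ≠ 0 := by positivity
  push_cast
  have hL : ∀ k : ℕ, ∑ i ∈ Finset.range (k + 1), (p : ℝ) ^ i * ((p ^ i).totient : ℝ) =
      (1 + (p : ℝ) ^ (2 * k + 1)) / (p + 1) := by
    intro k
    induction k with
    | zero => simp; field_simp; ring
    | succ k ih =>
      rw [Finset.sum_range_succ, ih, Nat.totient_prime_pow_succ hp]
      push_cast [Nat.cast_sub hp.one_le]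
      field_simp
      ring
  have hR : ∀ k : ℕ, ∑ i ∈ Finset.range (k + 1), gA (p ^ i) =
      (1 + (p : ℝ) ^ (2 * k + 1)) / (p + 1) / ((p : ℝ) ^ k) ^ 2 := by
    intro k
    induction k with
    | zero => simp [gA_apply]; field_simp; ring
    | succ k ih =>
      rw [Finset.sum_range_succ, ih, gA_apply, Nat.primeFactors_prime_pow (by omega) hp]
      simp only [Finset.prod_singleton]
      push_cast
      field_simp
      ring
  rw [hL, hR]

lemma stephens_div (n : ℕ) : (stephensSum n : ℝ) / (n : ℝ) ^ 2 = ∑ d ∈ n.divisors, gA d := by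
  rw [← sA_apply, sA_eq, ArithmeticFunction.coe_mul_zeta_apply]

lemma gA_abs (d : ℕ) : |gA d| ≤ 1 / d := by
  rcases Nat.eq_zero_or_pos d with rfl | hd
  · simp
  have hd' : (0 : ℝ) < d := by exact_mod_cast hd
  rw [gA_apply, abs_div, abs_of_pos (by positivity : (0:ℝ) < (d:ℝ)^2), Finset.abs_prod]
  have h1 : ∏ p ∈ d.primeFactors, |1 - (p:ℝ)| ≤ d := by
    calc ∏ p ∈ d.primeFactors, |1 - (p:ℝ)| ≤ ∏ p ∈ d.primeFactors, (p:ℝ) := by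
          refine Finset.prod_le_prod (fun _ _ => abs_nonneg _) fun p hp => ?_
          have : (1:ℝ) ≤ p := by exact_mod_cast (Nat.prime_of_mem_primeFactors hp).one_le
          rw [abs_le]; constructor <;> linarith
      _ ≤ d := by
          rw [← Nat.cast_prod, Nat.cast_le]
          exact Nat.le_of_dvd hd (Nat.prod_primeFactors_dvd d)
  rw [div_le_div_iff₀ (by positivity) hd']
  nlinarith

/-- `G(d) = g(d)/φ(d)`. -/
noncomputable def hA : ArithmeticFunction ℝ where
  toFun d := gA d * ((d.totient : ℝ))⁻¹
  map_zero' := by simp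

lemma hA_apply (d : ℕ) : hA d = gA d * ((d.totient : ℝ))⁻¹ := rfl

lemma hA_mult : hA.IsMultiplicative := by
  rw [ArithmeticFunction.IsMultiplicative.iff_ne_zero]
  refine ⟨by simp [hA_apply, gA_mult.map_one], ?_⟩
  intro m n hm hn h
  rw [hA_apply, hA_apply, hA_apply, gA_mult.map_mul_of_coprime h, Nat.totient_mul h]
  push_cast
  rw [mul_inv]
  ring

lemma hA_tsum (hs : Summable (fun d => ‖hA d‖)) : ∑' d, hA d = stephensConstant := by
  rw [← hA_mult.eulerProduct_tprod hs, stephensConstant]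
  refine tprod_congr fun p => ?_
  have hp := p.2
  set q : ℕ := (p : ℕ) with hq
  have hq2 : (2:ℝ) ≤ q := by exact_mod_cast hp.two_le
  have hq0 : (q:ℝ) ≠ 0 := by positivity
  have hq3 : (1:ℝ) < (q:ℝ)^3 := by nlinarith [sq_nonneg ((q:ℝ)-1), pow_succ (q:ℝ) 2]
  have hterm : ∀ k : ℕ, hA (q ^ (k + 1)) = -(q:ℝ) * ((q:ℝ)^3)⁻¹ * (((q:ℝ)^3)⁻¹) ^ k := by
    intro k
    rw [hA_apply, gA_apply, Nat.primeFactors_prime_pow (by omega) hp, Nat.totient_prime_pow_succ hp]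
    simp only [Finset.prod_singleton]
    push_cast [Nat.cast_sub hp.one_le]
    have : (q:ℝ) - 1 ≠ 0 := by linarith
    rw [inv_pow]
    field_simp
    ring
  have hr : ((q:ℝ)^3)⁻¹ < 1 := inv_lt_one_of_one_lt₀ hq3
  have hr0 : 0 ≤ ((q:ℝ)^3)⁻¹ := by positivity
  have hsum : Summable (fun k : ℕ => hA (q ^ k)) := by
    rw [← summable_nat_add_iff 1]
    simp only [hterm]
    exact (summable_geometric_of_lt_one hr0 hr).mul_left _
  rw [hsum.tsum_eq_zero_add]
  simp only [hterm]
  rw [tsum_mul_left, tsum_geometric_of_lt_one hr0 hr]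
  simp only [pow_zero, hA_mult.map_one]
  have : (q:ℝ)^3 - 1 ≠ 0 := by linarith
  field_simp
  ring

open Filter MeasureTheory Topology

lemma apPrimes_eq_image (N : ℕ) :
    apPrimes 1 (Nat.nth Nat.Prime N - 1) = (Finset.range N).image (Nat.nth Nat.Prime) := by
  have hinf : (Set.ofPred Nat.Prime).Infinite := Nat.infinite_setOfPred_prime
  ext p
  simp only [apPrimes, Finset.mem_filter, Finset.mem_Icc, Finset.mem_image, Finset.mem_range,
    one_dvd, and_true]
  constructor
  · rintro ⟨⟨h1, h2⟩, hp⟩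
    have hlt : p < Nat.nth Nat.Prime N := by
      have := (Nat.prime_nth_prime N).two_le
      omega
    refine ⟨Nat.count Nat.Prime p, ?_, Nat.nth_count hp⟩
    rw [← Nat.nth_lt_nth hinf, Nat.nth_count hp]
    exact hlt
  · rintro ⟨i, hi, rfl⟩
    have h1 := (Nat.prime_nth_prime i)
    have h2 : Nat.nth Nat.Prime i < Nat.nth Nat.Prime N := (Nat.nth_lt_nth hinf).mpr hi
    exact ⟨⟨h1.one_le, by omega⟩, h1⟩

lemma apPrimes_card_one (N : ℕ) : (apPrimes 1 (Nat.nth Nat.Prime N - 1)).card = N := by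
  rw [apPrimes_eq_image, Finset.card_image_of_injective _ (Nat.nth_injective Nat.infinite_setOfPred_prime),
    Finset.card_range]

lemma sum_eq_tsum (N : ℕ) :
    (1 / (N : ℝ)) * ∑ i ∈ Finset.range N,
      (stephensSum (Nat.nth Nat.Prime i - 1) : ℝ) / ((Nat.nth Nat.Prime i : ℝ) - 1) ^ 2 =
    ∑' d : ℕ, gA d * (((apPrimes d (Nat.nth Nat.Prime N - 1)).card : ℝ) /
      ((apPrimes 1 (Nat.nth Nat.Prime N - 1)).card : ℝ)) := by
  set x := Nat.nth Nat.Prime N - 1 with hx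
  have hcard := apPrimes_card_one N
  rw [← hx] at hcard
  have h1 : ∑ i ∈ Finset.range N,
      (stephensSum (Nat.nth Nat.Prime i - 1) : ℝ) / ((Nat.nth Nat.Prime i : ℝ) - 1) ^ 2 =
      ∑ p ∈ apPrimes 1 x, ∑ d ∈ (p - 1).divisors, gA d := by
    rw [hx, apPrimes_eq_image, Finset.sum_image
      (Nat.nth_injective Nat.infinite_setOfPred_prime).injOn]
    refine Finset.sum_congr rfl fun i _ => ?_
    rw [← stephens_div, Nat.cast_sub (Nat.prime_nth_prime i).one_le, Nat.cast_one]
  have h2 : ∀ p ∈ apPrimes 1 x, ∑ d ∈ (p - 1).divisors, gA d =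
      ∑ d ∈ Finset.range (x + 1), if d ∣ p - 1 then gA d else 0 := by
    intro p hp
    simp only [apPrimes, Finset.mem_filter, Finset.mem_Icc] at hp
    have hp2 := hp.2.1.two_le
    rw [← Finset.sum_filter]
    refine Finset.sum_congr ?_ fun _ _ => rfl
    ext d
    simp only [Nat.mem_divisors, Finset.mem_filter, Finset.mem_range]
    constructor
    · rintro ⟨h, h'⟩
      have := Nat.le_of_dvd (by omega) h
      exact ⟨by omega, h⟩
    · rintro ⟨h, h'⟩
      exact ⟨h', by omega⟩
  have h3 : ∀ d, (∑ p ∈ apPrimes 1 x, if d ∣ p - 1 then gA d else 0) =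
      gA d * (apPrimes d x).card := by
    intro d
    rw [← Finset.sum_filter, Finset.sum_const, nsmul_eq_mul, mul_comm]
    congr 3
    ext p
    simp [apPrimes, and_assoc]
  rw [h1, Finset.sum_congr rfl h2, Finset.sum_comm, Finset.sum_congr rfl fun d _ => h3 d,
    tsum_eq_sum (s := Finset.range (x + 1)), Finset.mul_sum, hcard]
  · refine Finset.sum_congr rfl fun d _ => ?_
    ring
  · intro d hd
    have : (apPrimes d x).card = 0 := by
      rw [Finset.card_eq_zero]
      ext p
      simp only [apPrimes, Finset.mem_filter, Finset.mem_Icc, Finset.notMem_empty, iff_false]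
      rintro ⟨⟨h1, h2⟩, hp, hdv⟩
      have := hp.two_le
      have := Nat.le_of_dvd (by omega) hdv
      rw [Finset.mem_range] at hd
      omega
    rw [this]; simp

lemma bound_summable : Summable (fun d : ℕ => 1 / (d:ℝ) * (64 * ((1 + Real.log d) / d))) := by
  have h : Summable (fun d : ℕ => 192 * ((d:ℝ) ^ (3/2:ℝ))⁻¹) :=
    (Real.summable_nat_rpow_inv.mpr (by norm_num)).mul_left _
  refine Summable.of_nonneg_of_le (fun d => ?_) (fun d => ?_) h
  · have : 0 ≤ Real.log d := Real.log_natCast_nonneg d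
    positivity
  · rcases Nat.eq_zero_or_pos d with rfl | hd
    · simp
    have hd' : (1:ℝ) ≤ d := by exact_mod_cast hd
    have hd0 : (0:ℝ) < d := by linarith
    have h1 := Real.log_le_sub_one_of_pos (x := (d:ℝ) ^ (1/2:ℝ)) (by positivity)
    rw [Real.log_rpow hd0] at h1
    have h2 : (1:ℝ) ≤ (d:ℝ) ^ (1/2:ℝ) := Real.one_le_rpow hd' (by norm_num)
    have h3 : 1 + Real.log d ≤ 3 * (d:ℝ) ^ (1/2:ℝ) := by linarith
    have h4 : (d:ℝ) ^ (3/2:ℝ) * (d:ℝ) ^ (1/2:ℝ) = (d:ℝ) * d := by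
      rw [← Real.rpow_add hd0]; norm_num [sq]
    have h5 : 0 < (d:ℝ) ^ (3/2:ℝ) := by positivity
    calc 1 / (d:ℝ) * (64 * ((1 + Real.log d) / d)) ≤ 1 / (d:ℝ) * (64 * ((3 * (d:ℝ) ^ (1/2:ℝ)) / d)) := by
          gcongr
      _ = 192 * ((d:ℝ) ^ (1/2:ℝ) / (d * d)) := by field_simp; ring
      _ = 192 * ((d:ℝ) ^ (3/2:ℝ))⁻¹ := by
          congr 1
          rw [← h4]
          field_simp

lemma ratio_tendsto (d : ℕ) (hd : 0 < d) :
    Tendsto (fun n : ℕ => ((apPrimes d n).card : ℝ) / ((apPrimes 1 n).card : ℝ)) atTop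
      (𝓝 ((d.totient : ℝ)⁻¹)) := by
  have h := (card_ap d hd).div (card_ap 1 one_pos) (by simp)
  simp only [Nat.totient_one, Nat.cast_one, inv_one, div_one] at h
  refine h.congr' ?_
  filter_upwards [eventually_gt_atTop 1] with n hn
  have hn' : (1:ℝ) < n := by exact_mod_cast hn
  have := Real.log_pos hn'
  simp only [Pi.div_apply]
  rw [div_div_div_cancel_right₀ (by positivity), mul_div_mul_right _ _ this.ne']

lemma ratio_bound : ∀ᶠ n : ℕ in atTop, ∀ d : ℕ,
    ‖gA d * (((apPrimes d n).card : ℝ) / ((apPrimes 1 n).card : ℝ))‖ ≤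
      1 / (d:ℝ) * (64 * ((1 + Real.log d) / d)) := by
  have h := card_ap 1 one_pos
  simp only [Nat.totient_one, Nat.cast_one, inv_one] at h
  filter_upwards [h.eventually (eventually_ge_nhds (show (1/2:ℝ) < 1 by norm_num)),
    eventually_ge_atTop 16] with n hn1 hn d
  rcases Nat.eq_zero_or_pos d with rfl | hd
  · simp
  have hn' : (16:ℝ) ≤ n := by exact_mod_cast hn
  have hlog : 0 < Real.log n := Real.log_pos (by linarith)
  have hb := card_ap_bound d n hd hn
  have hld : 0 ≤ Real.log d := Real.log_natCast_nonneg d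
  have hd' : (0:ℝ) < d := by exact_mod_cast hd
  have hc : (1/2) * (n / Real.log n) ≤ ((apPrimes 1 n).card : ℝ) := by
    rw [le_div_iff₀ (by linarith)] at hn1
    rw [← mul_div_assoc, div_le_iff₀ hlog]
    exact hn1
  have hpos : 0 < (n / Real.log n) := by positivity
  have hcpos : (0:ℝ) < (apPrimes 1 n).card := by linarith
  rw [norm_mul, Real.norm_eq_abs, Real.norm_eq_abs]
  refine mul_le_mul (gA_abs d) ?_ (abs_nonneg _) (by positivity)
  rw [abs_of_nonneg (by positivity), div_le_iff₀ hcpos]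
  have hK : 0 ≤ (1 + Real.log d) / d := by positivity
  calc _ ≤ _ := hb
    _ = 64 * ((1 + Real.log d) / d) * ((1/2) * (n / Real.log n)) := by ring
    _ ≤ _ := by gcongr

lemma term_tendsto (d : ℕ) :
    Tendsto (fun n : ℕ => gA d * (((apPrimes d n).card : ℝ) / ((apPrimes 1 n).card : ℝ))) atTop
      (𝓝 (hA d)) := by
  rcases Nat.eq_zero_or_pos d with rfl | hd
  · simp
  · exact (ratio_tendsto d hd).const_mul _

lemma hA_summable : Summable (fun d => ‖hA d‖) := by
  refine Summable.of_nonneg_of_le (fun d => norm_nonneg _) (fun d => ?_) bound_summable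
  refine le_of_tendsto (term_tendsto d).norm ?_
  filter_upwards [ratio_bound] with n hn using hn d

/-- The average `(1/N) ∑_{i=1}^N 𝒮(p_i - 1)/(p_i - 1)²` over the first `N` primes
tends to Stephens' constant. -/
theorem stephens_summation_formula :
    Tendsto (fun N : ℕ =>
        (1 / (N : ℝ)) * ∑ i ∈ Finset.range N,
          (stephensSum (Nat.nth Nat.Prime i - 1) : ℝ) / ((Nat.nth Nat.Prime i : ℝ) - 1) ^ 2)
      atTop (nhds stephensConstant) := by
  have hx : Tendsto (fun N : ℕ => Nat.nth Nat.Prime N - 1) atTop atTop :=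
    (tendsto_sub_atTop_nat 1).comp
      (Nat.nth_strictMono Nat.infinite_setOfPred_prime).tendsto_atTop
  have hmain : Tendsto (fun n : ℕ => ∑' d : ℕ, gA d *
      (((apPrimes d n).card : ℝ) / ((apPrimes 1 n).card : ℝ))) atTop (𝓝 (∑' d, hA d)) :=
    tendsto_tsum_of_dominated_convergence bound_summable term_tendsto ratio_bound
  rw [hA_tsum hA_summable] at hmain
  refine (hmain.comp hx).congr fun N => ?_
  rw [sum_eq_tsum]
  rfl
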